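/- Let α be a type with decidable equality and let n ≥ 2. If s, s' : Fin n → α are two samples that differ in exactly one index (s i = s' i for all but one i), then the plug-in entropy estimators satisfy |Ĥ(s) − Ĥ(s')| ≤ 2 · log n / n. -/

import Mathlib

open Finset

/-- The plug-in (maximum-likelihood) entropy estimator of the empirical
distribution of a finite sample `s : Fin n → α`, using the natural logarithm
and the convention `0 * log 0 = 0` (terms outside the image of `s` vanish). -/
noncomputable def empEntropy {α : Type*} [DecidableEq α] {n : ℕ} (s : Fin n → α) : ℝ :=
  -∑ a ∈ Finset.image s Finset.univ,
      (((Finset.univ.filter fun i => s i = a).card : ℝ) / n) *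
        Real.log (((Finset.univ.filter fun i => s i = a).card : ℝ) / n)

/-!
Up to the additive constant `log n`, the entropy is `1 / n` times the sum over the categories of
`-c log c`, where `c` is the count of the category. If the observation `j` is removed, the two
samples have the same counts, and putting it back raises a single count `c < n` by one. Hence the
two entropies differ by `1 / n` times the difference of two increments of `-c log c`, and each of
these lies between `-2 log n` and `0`. For `c ≥ 1` the lower bound is Bernoulli's inequality
`(1 + c) ^ ((c - 1) / c) ≤ c`.
-/

open Real
open scoped fwdDiff

section NegMulLog

lemma sub_one_mul_log_add_one_le_mul_log {x : ℝ} (hx : 1 ≤ x) :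
    (x - 1) * log (x + 1) ≤ x * log x := by
  have hx0 : 0 < x := by linarith
  have bernoulli : (1 + x) ^ ((x - 1) / x) ≤ x :=
    calc (1 + x) ^ ((x - 1) / x) ≤ 1 + (x - 1) / x * x :=
          rpow_one_add_le_one_add_mul_self (by linarith) (div_nonneg (by linarith) hx0.le)
            (div_le_one_of_le₀ (by linarith) hx0.le)
      _ = x := by rw [div_mul_cancel₀ _ hx0.ne', add_sub_cancel]
  calc (x - 1) * log (x + 1) = x * ((x - 1) / x * log (1 + x)) := by
        rw [add_comm 1 x]; field_simp
    _ = x * log ((1 + x) ^ ((x - 1) / x)) := by rw [log_rpow (by positivity)]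
    _ ≤ x * log x := by gcongr

lemma negMulLog_add_one_le {x : ℝ} (hx : 0 ≤ x) : negMulLog (x + 1) ≤ negMulLog x := by
  obtain rfl | hx0 := hx.eq_or_lt
  · simp
  have hmul : x * log x ≤ (x + 1) * log (x + 1) :=
    calc x * log x ≤ x * log (x + 1) := by gcongr; linarith
      _ ≤ (x + 1) * log (x + 1) := by
        gcongr
        · exact log_nonneg (by linarith)
        · linarith
  simpa only [negMulLog, neg_mul, neg_le_neg_iff] using hmul

lemma fwdDiff_negMulLog_natCast_nonpos (t : ℕ) : Δ_[1] (fun k : ℕ ↦ negMulLog k) t ≤ 0 := by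
  simpa [fwdDiff] using negMulLog_add_one_le t.cast_nonneg

lemma neg_two_mul_log_le_fwdDiff_negMulLog_natCast (t : ℕ) :
    -(2 * log (t + 1)) ≤ Δ_[1] (fun k : ℕ ↦ negMulLog k) t := by
  obtain rfl | ht := t.eq_zero_or_pos
  · simp [fwdDiff]
  have hlog := sub_one_mul_log_add_one_le_mul_log (x := t) (by exact_mod_cast ht)
  simp only [fwdDiff, negMulLog, Nat.cast_add, Nat.cast_one]
  linarith

end NegMulLog

lemma sum_card_filter_insert_eq_add_fwdDiff {ι α G : Type*} [DecidableEq ι] [DecidableEq α]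
    [AddCommGroup G] (g : ℕ → G) (s : ι → α) {j : ι} {J : Finset ι} (hj : j ∉ J) {S : Finset α}
    (hS : s j ∈ S) :
    ∑ a ∈ S, g #{i ∈ insert j J | s i = a} =
      ∑ a ∈ S, g #{i ∈ J | s i = a} + Δ_[1] g #{i ∈ J | s i = s j} := by
  have hself : #{i ∈ insert j J | s i = s j} = #{i ∈ J | s i = s j} + 1 := by
    rw [filter_insert, if_pos rfl, card_insert_of_notMem (by simp [hj])]
  have hother : ∀ a ∈ S.erase (s j), g #{i ∈ insert j J | s i = a} = g #{i ∈ J | s i = a} := by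
    intro a ha
    rw [filter_insert, if_neg (ne_of_mem_erase ha).symm]
  rw [← add_sum_erase S _ hS, ← add_sum_erase S _ hS, sum_congr rfl hother, hself, fwdDiff]
  abel

section EmpEntropy

variable {α : Type*} [DecidableEq α] {n : ℕ}

lemma empEntropy_eq_sum_negMulLog (s : Fin n → α) {S : Finset α} (hS : image s univ ⊆ S) :
    empEntropy s = ∑ a ∈ S, negMulLog (#{i | s i = a} / n) := by
  have hzero : ∀ a ∈ S, a ∉ image s univ → negMulLog ((#{i | s i = a} : ℝ) / n) = 0 := by
    intro a _ ha
    have hempty : #{i | s i = a} = 0 := by simpa [filter_eq_empty_iff] using ha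
    simp [hempty]
  rw [← sum_subset hS hzero, empEntropy]
  simp only [negMulLog, neg_mul, sum_neg_distrib]

lemma empEntropy_eq_log_add_sum_negMulLog_div (hn : n ≠ 0) (s : Fin n → α) {S : Finset α}
    (hS : image s univ ⊆ S) :
    empEntropy s = log n + (∑ a ∈ S, negMulLog #{i | s i = a}) / n := by
  have hcount : ∑ a ∈ S, (#{i | s i = a} : ℝ) = n := by
    have hcard := card_eq_sum_card_fiberwise (s := univ) (t := S) (f := s)
      fun i _ ↦ hS (mem_image_of_mem s (mem_univ i))
    rw [card_univ, Fintype.card_fin] at hcard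
    exact_mod_cast hcard.symm
  have hinv : (n : ℝ) * negMulLog (n : ℝ)⁻¹ = log n := by
    rw [negMulLog, log_inv]
    field_simp
  simp only [empEntropy_eq_sum_negMulLog s hS, div_eq_mul_inv, negMulLog_mul, sum_add_distrib,
    ← mul_sum, ← sum_mul, hcount, hinv]
  ring

lemma empEntropy_sub_empEntropy_eq_fwdDiff {s s' : Fin n → α} {j : Fin n}
    (hdiff : ∀ i, i ≠ j → s i = s' i) :
    empEntropy s - empEntropy s' =
      (Δ_[1] (fun k : ℕ ↦ negMulLog k) #{i ∈ univ.erase j | s i = s j} -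
        Δ_[1] (fun k : ℕ ↦ negMulLog k) #{i ∈ univ.erase j | s' i = s' j}) / n := by
  have hcount : ∀ a, #{i ∈ univ.erase j | s i = a} = #{i ∈ univ.erase j | s' i = a} := fun a ↦
    congrArg card (filter_congr fun i hi ↦ by rw [hdiff i (ne_of_mem_erase hi)])
  have hS : image s univ ⊆ image s univ ∪ image s' univ := subset_union_left
  have hS' : image s' univ ⊆ image s univ ∪ image s' univ := subset_union_right
  have hsplit := sum_card_filter_insert_eq_add_fwdDiff (fun k : ℕ ↦ negMulLog k) s
    (notMem_erase j univ) (hS (mem_image_of_mem s (mem_univ j)))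
  have hsplit' := sum_card_filter_insert_eq_add_fwdDiff (fun k : ℕ ↦ negMulLog k) s'
    (notMem_erase j univ) (hS' (mem_image_of_mem s' (mem_univ j)))
  rw [insert_erase (mem_univ j)] at hsplit hsplit'
  rw [empEntropy_eq_log_add_sum_negMulLog_div j.pos.ne' s hS,
    empEntropy_eq_log_add_sum_negMulLog_div j.pos.ne' s' hS', hsplit, hsplit']
  simp only [hcount]
  ring

end EmpEntropy

/-- Bounded-difference property of the plug-in entropy estimator under the
replacement of a single observation. -/
theorem empEntropy_bounded_difference {α : Type*} [DecidableEq α] {n : ℕ} (hn : 2 ≤ n)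
    (s s' : Fin n → α) (j : Fin n) (hdiff : ∀ i : Fin n, i ≠ j → s i = s' i) :
    |empEntropy s - empEntropy s'| ≤ 2 * Real.log n / n := by
  have hincrement (r : Fin n → α) :
      Δ_[1] (fun k : ℕ ↦ negMulLog k) #{i ∈ univ.erase j | r i = r j} ∈
        Set.Icc (-(2 * log n)) 0 := by
    refine ⟨le_trans ?_ (neg_two_mul_log_le_fwdDiff_negMulLog_natCast _),
      fwdDiff_negMulLog_natCast_nonpos _⟩
    have hlt : #{i ∈ univ.erase j | r i = r j} < n := by
      calc #{i ∈ univ.erase j | r i = r j} ≤ #(univ.erase j) := card_filter_le _ _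
        _ < n := by simpa using card_erase_lt_of_mem (mem_univ j)
    gcongr
    exact_mod_cast hlt
  rw [empEntropy_sub_empEntropy_eq_fwdDiff hdiff, abs_div, Nat.abs_cast]
  gcongr
  simpa using abs_sub_le_of_le_of_le (hincrement s).1 (hincrement s).2
    (hincrement s').1 (hincrement s').2
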